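/- arXiv:2207.12453 — 4 statements merged into one kernel-verified Lean document; each statement's English description precedes it below -/
import Mathlib

section
/- Let Z₁, …, Z_n be real-valued random variables on a probability space (no independence is assumed). Assume there exist positive constants σ₁, …, σ_n and c₁, …, c_n such that for every i ∈ {1,…,n} and every t ∈ [0, 1/c_i), log E[exp(t Z_i)] ≤ (σ_i t)² / (1 − c_i t). Then, setting σ = σ₁ + ⋯ + σ_n and C = c₁ + ⋯ + c_n, for every t ∈ [0, 1/C), log E[exp(t (Z₁ + Z₂ + ⋯ + Z_n))] ≤ (σ t)² / (1 − C t). -/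
open MeasureTheory

/-!
The proof applies Hölder's inequality once, with all `n` factors at the same time. For weights
`p i > 0` summing to one it gives `log E[exp (t ∑ Z i)] ≤ ∑ p i * log E[exp ((t / p i) Z i)]`
(`integral_exp_sum_le`). When `c i * t < p i`, the hypothesis bounds the `i`-th term by
`(σ i * t) ^ 2 / (p i - c i * t)`. By the equality case of Cauchy-Schwarz, the sum of these is
smallest when `p i - c i * t` is proportional to `σ i`, that is for
`p i = c i * t + (1 - C * t) * σ i / σ`, and its value there is exactly `(σ * t) ^ 2 / (1 - C * t)`.
-/

/-- Hölder's inequality for exponentials: the geometric form of the convexity of the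
log-Laplace functional `X ↦ log E[exp X]`. -/
lemma integral_exp_sum_le {Ω ι : Type*} [MeasurableSpace Ω] (μ : Measure Ω) (s : Finset ι)
    (X : ι → Ω → ℝ) (p : ι → ℝ) (hp : ∀ i ∈ s, 0 ≤ p i) (hp1 : ∑ i ∈ s, p i = 1)
    (hX : ∀ i ∈ s, Integrable (fun ω => Real.exp (X i ω)) μ)
    (hm : AEStronglyMeasurable (fun ω => Real.exp (∑ i ∈ s, p i * X i ω)) μ) :
    ∫ ω, Real.exp (∑ i ∈ s, p i * X i ω) ∂μ
      ≤ ∏ i ∈ s, (∫ ω, Real.exp (X i ω) ∂μ) ^ p i := by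
  have hI : ∀ i, 0 ≤ ∫ ω, Real.exp (X i ω) ∂μ := fun i =>
    integral_nonneg fun ω => (Real.exp_pos _).le
  have key := ENNReal.lintegral_prod_norm_pow_le (μ := μ) s
    (f := fun i ω => ENNReal.ofReal (Real.exp (X i ω)))
    (fun i hi => (hX i hi).aemeasurable.ennreal_ofReal) hp1 hp
  have hL : ∀ ω, ∏ i ∈ s, ENNReal.ofReal (Real.exp (X i ω)) ^ p i
      = ENNReal.ofReal (Real.exp (∑ i ∈ s, p i * X i ω)) := by
    intro ω
    rw [Real.exp_sum, ENNReal.ofReal_prod_of_nonneg fun i _ => (Real.exp_pos _).le]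
    refine Finset.prod_congr rfl fun i hi => ?_
    rw [ENNReal.ofReal_rpow_of_pos (Real.exp_pos _), ← Real.exp_mul, mul_comm]
  have hR : ∏ i ∈ s, (∫⁻ ω, ENNReal.ofReal (Real.exp (X i ω)) ∂μ) ^ p i
      = ENNReal.ofReal (∏ i ∈ s, (∫ ω, Real.exp (X i ω) ∂μ) ^ p i) := by
    rw [ENNReal.ofReal_prod_of_nonneg fun i _ => Real.rpow_nonneg (hI i) _]
    refine Finset.prod_congr rfl fun i hi => ?_
    rw [← ofReal_integral_eq_lintegral_ofReal (hX i hi)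
        (Filter.Eventually.of_forall fun ω => (Real.exp_pos _).le),
      ENNReal.ofReal_rpow_of_nonneg (hI i) (hp i hi)]
  simp only [hL] at key
  rw [hR] at key
  rw [integral_eq_lintegral_of_nonneg_ae
    (Filter.Eventually.of_forall fun ω => (Real.exp_pos _).le) hm]
  exact ENNReal.toReal_le_of_le_ofReal
    (Finset.prod_nonneg fun i _ => Real.rpow_nonneg (hI i) _) key

/-- Tensorization of log-Laplace transform bounds. -/
theorem tensorization_log_laplace
    {Ω : Type*} [MeasurableSpace Ω] (μ : Measure Ω) [IsProbabilityMeasure μ]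
    (n : ℕ) (Z : ℕ → Ω → ℝ) (σ c : ℕ → ℝ)
    (hmeas : ∀ i ∈ Finset.Icc 1 n, Measurable (Z i))
    (hσ : ∀ i ∈ Finset.Icc 1 n, 0 < σ i)
    (hc : ∀ i ∈ Finset.Icc 1 n, 0 < c i)
    (hint : ∀ i ∈ Finset.Icc 1 n, ∀ t : ℝ, 0 ≤ t → t < 1 / c i →
      Integrable (fun ω => Real.exp (t * Z i ω)) μ)
    (hlog : ∀ i ∈ Finset.Icc 1 n, ∀ t : ℝ, 0 ≤ t → t < 1 / c i →
      Real.log (∫ ω, Real.exp (t * Z i ω) ∂μ) ≤ (σ i * t) ^ 2 / (1 - c i * t)) :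
    ∀ t : ℝ, 0 ≤ t → t < 1 / ∑ i ∈ Finset.Icc 1 n, c i →
      Real.log (∫ ω, Real.exp (t * ∑ i ∈ Finset.Icc 1 n, Z i ω) ∂μ)
        ≤ ((∑ i ∈ Finset.Icc 1 n, σ i) * t) ^ 2
            / (1 - (∑ i ∈ Finset.Icc 1 n, c i) * t) := by
  intro t ht0 htC
  set s := Finset.Icc 1 n
  set S := ∑ i ∈ s, σ i with hS
  set C := ∑ i ∈ s, c i with hC
  -- For `n = 0` the range of `t` is empty, since `1 / 0 = 0`.
  have hs : s.Nonempty := by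
    by_contra h
    rw [Finset.not_nonempty_iff_eq_empty] at h
    simp only [hC, h, Finset.sum_empty, div_zero] at htC
    linarith
  have hS0 : 0 < S := Finset.sum_pos hσ hs
  have hC0 : 0 < C := Finset.sum_pos hc hs
  have hD : 0 < 1 - C * t := by
    rw [lt_div_iff₀ hC0] at htC
    linarith
  set D := 1 - C * t with hDdef
  set p : ℕ → ℝ := fun i => c i * t + D * σ i / S with hpdef
  have hgap : ∀ i ∈ s, 0 < D * σ i / S := fun i hi => div_pos (mul_pos hD (hσ i hi)) hS0
  have hp : ∀ i ∈ s, 0 < p i := fun i hi =>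
    add_pos_of_nonneg_of_pos (mul_nonneg (hc i hi).le ht0) (hgap i hi)
  have hp1 : ∑ i ∈ s, p i = 1 := by
    simp only [hpdef, Finset.sum_add_distrib, ← Finset.sum_mul, ← Finset.sum_div,
      ← Finset.mul_sum]
    rw [← hS, ← hC, mul_div_assoc, div_self hS0.ne', hDdef]
    ring
  have hu0 : ∀ i ∈ s, 0 ≤ t / p i := fun i hi => div_nonneg ht0 (hp i hi).le
  have hu1 : ∀ i ∈ s, t / p i < 1 / c i := by
    intro i hi
    rw [div_lt_div_iff₀ (hp i hi) (hc i hi)]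
    have := hgap i hi
    simp only [hpdef]
    linarith
  have hX := fun i hi => hint i hi (t / p i) (hu0 i hi) (hu1 i hi)
  have hsum : ∀ ω, t * ∑ i ∈ s, Z i ω = ∑ i ∈ s, p i * (t / p i * Z i ω) := by
    intro ω
    rw [Finset.mul_sum]
    refine Finset.sum_congr rfl fun i hi => ?_
    have := (hp i hi).ne'
    field_simp
  have hterm : ∀ i ∈ s, (∫ ω, Real.exp (t / p i * Z i ω) ∂μ) ^ p i
      ≤ Real.exp (σ i * (S * t ^ 2 / D)) := by
    intro i hi
    have hpos : 0 < ∫ ω, Real.exp (t / p i * Z i ω) ∂μ := integral_exp_pos (hX i hi)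
    rw [Real.rpow_def_of_pos hpos, Real.exp_le_exp]
    refine (mul_le_mul_of_nonneg_right (hlog i hi _ (hu0 i hi) (hu1 i hi)) (hp i hi).le).trans_eq ?_
    have hpi := (hp i hi).ne'
    have hσi := (hσ i hi).ne'
    have h1 : 1 - c i * (t / p i) = (D * σ i / S) / p i := by
      rw [eq_div_iff hpi, sub_mul, mul_assoc, div_mul_cancel₀ _ hpi]
      simp only [hpdef]
      ring
    rw [h1]
    have := hD.ne'
    have := hS0.ne'
    clear_value p D
    field_simp
  have hmain : ∫ ω, Real.exp (t * ∑ i ∈ s, Z i ω) ∂μ ≤ Real.exp ((S * t) ^ 2 / D) := by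
    simp only [hsum]
    refine (integral_exp_sum_le μ s (fun i ω => t / p i * Z i ω) p (fun i hi => (hp i hi).le)
      hp1 hX ?_).trans ?_
    · refine (Measurable.exp ?_).aestronglyMeasurable
      exact Finset.measurable_fun_sum s fun i hi => ((hmeas i hi).const_mul _).const_mul _
    · refine (Finset.prod_le_prod (fun i hi => Real.rpow_nonneg
        (integral_nonneg fun ω => (Real.exp_pos _).le) _) hterm).trans_eq ?_
      rw [← Real.exp_sum, ← Finset.sum_mul, ← hS]
      congr 1
      ring
  have hnn : 0 ≤ ∫ ω, Real.exp (t * ∑ i ∈ s, Z i ω) ∂μ :=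
    integral_nonneg fun ω => (Real.exp_pos _).le
  -- A vanishing integral has `log 0 = 0`, so integrability of the left side is not needed.
  rcases hnn.eq_or_lt with h0 | h0
  · rw [← h0, Real.log_zero]
    positivity
  · exact (Real.log_le_iff_le_exp h0).2 hmain
end

section
/- Let a > 0 and M > 0. Let Z₁, …, Z_n be real-valued random variables on a probability space with |Z_i| ≤ M almost surely for each i. Suppose that for each i ∈ {2,…,n} there exists a real-valued random variable W_i on the same probability space such that W_i has the same distribution as Z_i, |W_i| ≤ M almost surely, and W_i is independent of the σ-algebra generated by (Z₁, …, Z_{i−1}). Then | E[exp(a Σ_{i=1}^n Z_i)] − Π_{i=1}^n E[exp(a Z_i)] | ≤ a · exp(a n M) · Σ_{i=2}^n ‖Z_i − W_i‖_{L²}. -/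
/-!
The proof replaces the variables by independent copies one at a time. Write `S` for the sum of the
first `n` variables. Since `W (n + 1)` is independent of `S` and distributed as `Z (n + 1)`,
`E[exp (a * S)] * E[exp (a * Z (n + 1))] = E[exp (a * S) * exp (a * W (n + 1))]`, so the
factorization error at this step is `E[exp (a * S) * (exp (a * Z (n + 1)) - exp (a * W (n + 1)))]`.
As `exp` is `exp (a * M)`-Lipschitz on `[-a * M, a * M]` and the `L¹` norm is at most the `L²` norm,
it is bounded by `exp (a * n * M) * a * exp (a * M) * ‖Z (n + 1) - W (n + 1)‖₂`
(`abs_integral_mul_exp_sub_le`). The error accumulated up to `n` is multiplied by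
`E[exp (a * Z (n + 1))] ≤ exp (a * M)`, which is exactly the growth allowed by the factor
`exp (a * n * M)`, and induction on `n` closes the argument.
-/

open MeasureTheory ProbabilityTheory
open scoped ENNReal

lemma abs_exp_mul_sub_exp_mul_le {a M x y : ℝ} (ha : 0 < a) (hx : |x| ≤ M) (hy : |y| ≤ M) :
    |Real.exp (a * x) - Real.exp (a * y)| ≤ a * Real.exp (a * M) * |x - y| := by
  -- By symmetry `y ≤ x`, and `1 - exp (-t) ≤ t` gives `exp u - exp v ≤ exp u * (u - v)`.
  wlog h : y ≤ x generalizing x y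
  · have := this hy hx (le_of_not_ge h)
    rwa [abs_sub_comm, abs_sub_comm x y]
  have h1 : a * y ≤ a * x := by gcongr
  rw [abs_of_nonneg (sub_nonneg.2 (Real.exp_le_exp.2 h1)), abs_of_nonneg (sub_nonneg.2 h)]
  have h2 : Real.exp (a * y) = Real.exp (a * x) * Real.exp (a * y - a * x) := by
    rw [← Real.exp_add]; ring_nf
  have h3 := Real.add_one_le_exp (a * y - a * x)
  have h4 : Real.exp (a * x) ≤ Real.exp (a * M) := by
    gcongr; exact (abs_le.1 hx).2
  have h5 : Real.exp (a * x) - Real.exp (a * y) ≤ Real.exp (a * x) * (a * (x - y)) := by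
    rw [h2]; nlinarith [Real.exp_pos (a * x)]
  calc _ ≤ _ := h5
    _ ≤ Real.exp (a * M) * (a * (x - y)) := by
      gcongr
    _ = _ := by ring

lemma integrable_exp_mul_of_abs_le {Ω : Type*} [MeasurableSpace Ω] {μ : Measure Ω}
    [IsProbabilityMeasure μ] {a M : ℝ} (ha : 0 < a) {Z : Ω → ℝ} (hZ : Measurable Z)
    (hZb : ∀ᵐ ω ∂μ, |Z ω| ≤ M) : Integrable (fun ω => Real.exp (a * Z ω)) μ := by
  refine Integrable.of_bound (by fun_prop) (Real.exp (a * M)) ?_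
  filter_upwards [hZb] with ω h
  rw [Real.norm_eq_abs, Real.abs_exp]
  gcongr
  exact (abs_le.1 h).2

lemma integral_abs_le_toReal_eLpNorm_two {Ω : Type*} [MeasurableSpace Ω] {μ : Measure Ω}
    [IsProbabilityMeasure μ] {f : Ω → ℝ} (hf : MemLp f 2 μ) :
    ∫ ω, |f ω| ∂μ ≤ (eLpNorm f 2 μ).toReal := by
  have h : ∫ ω, |f ω| ∂μ = (eLpNorm f 1 μ).toReal := by
    rw [eLpNorm_one_eq_lintegral_enorm, ← integral_norm_eq_lintegral_enorm hf.1]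
    simp only [Real.norm_eq_abs]
  rw [h]
  exact ENNReal.toReal_mono hf.2.ne
    (eLpNorm_le_eLpNorm_of_exponent_le (by norm_num) hf.1)

/-- One step of the replacement: if `W` is a copy of `Z` independent of `S`, then the factorization
error of `E[exp (a * (S + Z))]` is controlled by the `L²` distance between `Z` and `W`. -/
lemma abs_integral_mul_exp_sub_le {Ω : Type*} [MeasurableSpace Ω] {μ : Measure Ω}
    [IsProbabilityMeasure μ] {a M K : ℝ} (ha : 0 < a) {S Z W : Ω → ℝ}
    (hS : Measurable S) (hZ : Measurable Z) (hW : Measurable W)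
    (hSb : ∀ᵐ ω ∂μ, |S ω| ≤ K) (hZb : ∀ᵐ ω ∂μ, |Z ω| ≤ M) (hWb : ∀ᵐ ω ∂μ, |W ω| ≤ M)
    (hd : Measure.map W μ = Measure.map Z μ) (hi : IndepFun W S μ) :
    |(∫ ω, Real.exp (a * S ω) * Real.exp (a * Z ω) ∂μ)
        - (∫ ω, Real.exp (a * S ω) ∂μ) * ∫ ω, Real.exp (a * Z ω) ∂μ|
      ≤ Real.exp (a * K) * (a * Real.exp (a * M))
        * (eLpNorm (fun ω => Z ω - W ω) 2 μ).toReal := by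
  have hexp : Measurable fun x : ℝ => Real.exp (a * x) := by fun_prop
  have hEW : ∫ ω, Real.exp (a * Z ω) ∂μ = ∫ ω, Real.exp (a * W ω) ∂μ := by
    rw [← integral_map (f := fun x => Real.exp (a * x)) hZ.aemeasurable
        hexp.aestronglyMeasurable,
      ← integral_map (f := fun x => Real.exp (a * x)) hW.aemeasurable
        hexp.aestronglyMeasurable, hd]
  have hprod : (∫ ω, Real.exp (a * S ω) ∂μ) * ∫ ω, Real.exp (a * W ω) ∂μ
      = ∫ ω, Real.exp (a * S ω) * Real.exp (a * W ω) ∂μ :=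
    ((hi.symm.comp hexp hexp).integral_fun_mul_eq_mul_integral
      (hexp.comp hS).aestronglyMeasurable (hexp.comp hW).aestronglyMeasurable).symm
  have hint : ∀ {Y : Ω → ℝ}, Measurable Y → (∀ᵐ ω ∂μ, |Y ω| ≤ M) →
      Integrable (fun ω => Real.exp (a * S ω) * Real.exp (a * Y ω)) μ := by
    intro Y hY hYb
    have := integrable_exp_mul_of_abs_le (M := K + M) ha (hS.add hY) (μ := μ) (by
      filter_upwards [hSb, hYb] with ω h1 h2
      exact (abs_add_le _ _).trans (add_le_add h1 h2))
    simpa only [Pi.add_apply, mul_add, Real.exp_add] using this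
  have hmem : MemLp (fun ω => Z ω - W ω) 2 μ := by
    refine MemLp.of_bound (hZ.sub hW).aestronglyMeasurable (M + M) ?_
    filter_upwards [hZb, hWb] with ω h1 h2
    exact (abs_sub _ _).trans (add_le_add h1 h2)
  have hmem1 : Integrable (fun ω => |Z ω - W ω|) μ := (hmem.integrable (by norm_num)).abs
  rw [hEW, hprod, ← integral_sub (hint hZ hZb) (hint hW hWb)]
  calc _ ≤ ∫ ω, |Real.exp (a * S ω) * Real.exp (a * Z ω)
            - Real.exp (a * S ω) * Real.exp (a * W ω)| ∂μ := abs_integral_le_integral_abs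
    _ ≤ ∫ ω, Real.exp (a * K) * (a * Real.exp (a * M)) * |Z ω - W ω| ∂μ := by
      refine integral_mono_ae ((hint hZ hZb).sub (hint hW hWb)).abs (hmem1.const_mul _) ?_
      filter_upwards [hSb, hZb, hWb] with ω h1 h2 h3
      rw [← mul_sub, abs_mul, Real.abs_exp, mul_assoc]
      have hSK : S ω ≤ K := (abs_le.1 h1).2
      gcongr
      exact abs_exp_mul_sub_exp_mul_le ha h2 h3
    _ = Real.exp (a * K) * (a * Real.exp (a * M)) * ∫ ω, |Z ω - W ω| ∂μ :=
      integral_const_mul _ _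
    _ ≤ _ := by
      gcongr
      exact integral_abs_le_toReal_eLpNorm_two hmem

/-- Bounding the difference between the Laplace transform of a sum of bounded dependent
random variables and the product of the marginal Laplace transforms via coupling. -/
theorem laplace_transform_coupling_bound
    {Ω : Type*} [MeasurableSpace Ω] (μ : Measure Ω) [IsProbabilityMeasure μ]
    (n : ℕ) (a M : ℝ) (ha : 0 < a) (hM : 0 < M)
    (Z W : ℕ → Ω → ℝ)
    (hZmeas : ∀ i ∈ Finset.Icc 1 n, Measurable (Z i))
    (hZbdd : ∀ i ∈ Finset.Icc 1 n, ∀ᵐ ω ∂μ, |Z i ω| ≤ M)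
    (hWmeas : ∀ i ∈ Finset.Icc 2 n, Measurable (W i))
    (hWdist : ∀ i ∈ Finset.Icc 2 n, Measure.map (W i) μ = Measure.map (Z i) μ)
    (hWbdd : ∀ i ∈ Finset.Icc 2 n, ∀ᵐ ω ∂μ, |W i ω| ≤ M)
    (hWindep : ∀ i ∈ Finset.Icc 2 n,
      Indep (MeasurableSpace.comap (W i) inferInstance)
        (⨆ j ∈ Finset.Icc 1 (i - 1), MeasurableSpace.comap (Z j) inferInstance) μ) :
    |(∫ ω, Real.exp (a * ∑ i ∈ Finset.Icc 1 n, Z i ω) ∂μ)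
        - ∏ i ∈ Finset.Icc 1 n, ∫ ω, Real.exp (a * Z i ω) ∂μ|
      ≤ a * Real.exp (a * n * M)
          * ∑ i ∈ Finset.Icc 2 n, (eLpNorm (fun ω => Z i ω - W i ω) 2 μ).toReal := by
  induction n with
  | zero => simp
  | succ n ih =>
    have hsub : ∀ k, Finset.Icc k n ⊆ Finset.Icc k (n + 1) :=
      fun k => Finset.Icc_subset_Icc_right n.le_succ
    have ih := ih (fun i hi => hZmeas i (hsub _ hi)) (fun i hi => hZbdd i (hsub _ hi))
      (fun i hi => hWmeas i (hsub _ hi)) (fun i hi => hWdist i (hsub _ hi))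
      (fun i hi => hWbdd i (hsub _ hi)) (fun i hi => hWindep i (hsub _ hi))
    rcases Nat.eq_zero_or_pos n with rfl | hn
    · simp
    have h1 : n + 1 ∈ Finset.Icc 1 (n + 1) := by simp
    have h2 : n + 1 ∈ Finset.Icc 2 (n + 1) := by simp; omega
    have hZ := hZmeas _ h1
    have hZb := hZbdd _ h1
    have hSmeas : Measurable fun ω => ∑ i ∈ Finset.Icc 1 n, Z i ω :=
      Finset.measurable_fun_sum _ fun i hi => hZmeas i (hsub _ hi)
    have hSb : ∀ᵐ ω ∂μ, |∑ i ∈ Finset.Icc 1 n, Z i ω| ≤ n * M := by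
      have : ∀ᵐ ω ∂μ, ∀ i ∈ Finset.Icc 1 n, |Z i ω| ≤ M :=
        (ae_ball_iff (Finset.countable_toSet _)).2 fun i hi => hZbdd i (hsub _ hi)
      filter_upwards [this] with ω h
      refine (Finset.abs_sum_le_sum_abs _ _).trans ((Finset.sum_le_sum h).trans ?_)
      simp
    have hind : IndepFun (W (n + 1)) (fun ω => ∑ i ∈ Finset.Icc 1 n, Z i ω) μ := by
      rw [IndepFun_iff_Indep]
      refine indep_of_indep_of_le_right (hWindep _ h2) ?_
      rw [Nat.add_sub_cancel, ← measurable_iff_comap_le]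
      refine Finset.measurable_fun_sum _ fun i hi => ?_
      exact measurable_iff_comap_le.2
        (le_iSup₂ (f := fun j (_ : j ∈ Finset.Icc 1 n) =>
          MeasurableSpace.comap (Z j) inferInstance) i hi)
    have step := abs_integral_mul_exp_sub_le ha hSmeas hZ (hWmeas _ h2) hSb hZb (hWbdd _ h2)
      (hWdist _ h2) hind
    have hE0 : 0 ≤ ∫ ω, Real.exp (a * Z (n + 1) ω) ∂μ :=
      integral_nonneg fun ω => (Real.exp_pos _).le
    have hE1 : ∫ ω, Real.exp (a * Z (n + 1) ω) ∂μ ≤ Real.exp (a * M) := by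
      have : ∫ ω, Real.exp (a * Z (n + 1) ω) ∂μ ≤ ∫ _, Real.exp (a * M) ∂μ := by
        refine integral_mono_ae (integrable_exp_mul_of_abs_le ha hZ hZb)
          (integrable_const _) ?_
        filter_upwards [hZb] with ω h
        have := (abs_le.1 h).2
        gcongr
      simpa using this
    rw [Finset.prod_Icc_succ_top (by omega), Finset.sum_Icc_succ_top (by omega)]
    simp only [Finset.sum_Icc_succ_top (show 1 ≤ n + 1 by omega), mul_add, Real.exp_add]
    set E := ∫ ω, Real.exp (a * Z (n + 1) ω) ∂μ
    set A := ∫ ω, Real.exp (a * ∑ i ∈ Finset.Icc 1 n, Z i ω) ∂μ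
    set P := ∏ i ∈ Finset.Icc 1 n, ∫ ω, Real.exp (a * Z i ω) ∂μ
    set B := ∫ ω, Real.exp (a * ∑ i ∈ Finset.Icc 1 n, Z i ω) * Real.exp (a * Z (n + 1) ω) ∂μ
    have hexp : Real.exp (a * ((n + 1 : ℕ) : ℝ) * M)
        = Real.exp (a * (n * M)) * Real.exp (a * M) := by
      rw [← Real.exp_add]; push_cast; ring_nf
    have ih' : |A - P| * E ≤ _ := mul_le_mul ih hE1 hE0 ((abs_nonneg _).trans ih)
    calc |B - P * E| = |(B - A * E) + (A - P) * E| := by ring_nf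
      _ ≤ |B - A * E| + |A - P| * E := by
        refine (abs_add_le _ _).trans_eq ?_
        rw [abs_mul, abs_of_nonneg hE0]
      _ ≤ _ := add_le_add step ih'
      _ = _ := by rw [hexp, mul_assoc a (n : ℝ) M]; ring
end

section
/- Let n and p be positive integers, K ∈ ℕ, C_κ > 0, and let β₁, …, β_n ∈ ℝ^p. Suppose there are change points 1 = η₀ < η₁ < ⋯ < η_K < η_{K+1} = n + 1 such that β_t = β_{η_k} whenever η_k ≤ t < η_{k+1} (for k = 0, …, K), and that each jump satisfies ‖β_{η_k} − β_{η_k − 1}‖₂ ≤ C_κ for k = 1, …, K, where ‖·‖₂ denotes the Euclidean norm on ℝ^p. Then for every nonempty integer interval I ⊆ {1, …, n} and every index i ∈ I, ‖ |I|^{−1} Σ_{t∈I} β_t − β_i ‖₂ ≤ (K + 1) C_κ. -/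
open Finset

/-! The last index of a segment carries the value of that segment, so each jump bound compares
the values of two consecutive segments. Telescoping over the at most `K` jumps separating the
segments of two indices shows that any two coefficients are within `K * Cκ` of each other.
The closed ball of radius `K * Cκ` around `β i` therefore contains all the coefficients of the
interval and, being convex, their average as well. -/

/-- The segments `[η j, η (j + 1))`, `j ≤ K`, cover `[η 0, η (K + 1))`. Monotonicity of `η` is
not needed: the first `j` with `t < η (j + 1)` works. -/
lemma exists_segment (η : ℕ → ℕ) (K t : ℕ) (h0 : η 0 ≤ t) (h1 : t < η (K + 1)) :
    ∃ j ≤ K, η j ≤ t ∧ t < η (j + 1) := by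
  induction K with
  | zero => exact ⟨0, le_rfl, h0, h1⟩
  | succ k ih =>
    rcases lt_or_ge t (η (k + 1)) with h | h
    · obtain ⟨j, hj, hjt⟩ := ih h
      exact ⟨j, hj.trans k.le_succ, hjt⟩
    · exact ⟨k + 1, le_rfl, h, h1⟩

lemma dist_le_of_step_le {E : Type*} [PseudoMetricSpace E] (f : ℕ → E) (K : ℕ) (C : ℝ)
    (hC : 0 ≤ C) (h : ∀ k < K, dist (f k) (f (k + 1)) ≤ C) (j k : ℕ) (hj : j ≤ K)
    (hk : k ≤ K) : dist (f j) (f k) ≤ K * C := by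
  wlog hjk : j ≤ k generalizing j k
  · rw [dist_comm]
    exact this k j hk hj (le_of_not_ge hjk)
  have h1 : dist (f j) (f k) ≤ ∑ _i ∈ Ico j k, C :=
    dist_le_Ico_sum_of_dist_le hjk fun _ hl => h _ (hl.trans_le hk)
  rw [sum_const, Nat.card_Ico, nsmul_eq_mul] at h1
  refine h1.trans (mul_le_mul_of_nonneg_right ?_ hC)
  exact_mod_cast (Nat.sub_le k j).trans hk

lemma norm_average_sub_le {ι E : Type*} [SeminormedAddCommGroup E] [NormedSpace ℝ E]
    (s : Finset ι) (hs : s.Nonempty) (f : ι → E) (c : E) (R : ℝ)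
    (h : ∀ t ∈ s, dist (f t) c ≤ R) : ‖(s.card : ℝ)⁻¹ • (∑ t ∈ s, f t) - c‖ ≤ R := by
  have hcard : (s.card : ℝ) ≠ 0 := by exact_mod_cast hs.card_pos.ne'
  have hmem : ∑ t ∈ s, (s.card : ℝ)⁻¹ • f t ∈ Metric.closedBall c R :=
    (convex_closedBall c R).sum_mem (fun _ _ => by positivity)
      (by rw [sum_const, nsmul_eq_mul, mul_inv_cancel₀ hcard]) h
  rwa [← smul_sum, mem_closedBall_iff_norm] at hmem

/-- For a piecewise-constant coefficient sequence with K change points and jumps bounded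
by C_κ in Euclidean norm, the interval-averaged coefficient is within (K+1)·C_κ of any
coefficient in the interval. -/
theorem piecewise_constant_average_bound
    (n p : ℕ) (hn : 0 < n) (hp : 0 < p) (K : ℕ) (Cκ : ℝ) (hCκ : 0 < Cκ)
    (β : ℕ → EuclideanSpace ℝ (Fin p)) (η : ℕ → ℕ)
    (hη0 : η 0 = 1) (hηlast : η (K + 1) = n + 1)
    (hηmono : ∀ k ≤ K, η k < η (k + 1))
    (hpiece : ∀ k ≤ K, ∀ t : ℕ, η k ≤ t → t < η (k + 1) → β t = β (η k))
    (hjump : ∀ k, 1 ≤ k → k ≤ K → ‖β (η k) - β (η k - 1)‖ ≤ Cκ) :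
    ∀ a b : ℕ, 1 ≤ a → a ≤ b → b ≤ n → ∀ i ∈ Finset.Icc a b,
      ‖(((Finset.Icc a b).card : ℝ))⁻¹ • (∑ t ∈ Finset.Icc a b, β t) - β i‖
        ≤ ((K : ℝ) + 1) * Cκ := by
  intro a b ha _ hb i hi
  have hstep : ∀ k < K, dist (β (η k)) (β (η (k + 1))) ≤ Cκ := by
    intro k hk
    have hlt := hηmono k hk.le
    -- `η (k + 1) - 1` is the last index of the `k`-th segment
    rw [← hpiece k hk.le (η (k + 1) - 1) (by omega) (by omega), dist_comm, dist_eq_norm]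
    exact hjump (k + 1) (by omega) hk
  have hseg : ∀ t ∈ Finset.Icc a b, ∃ k ≤ K, β t = β (η k) := by
    intro t ht
    rw [Finset.mem_Icc] at ht
    obtain ⟨k, hk, h1, h2⟩ := exists_segment η K t (by omega) (by omega)
    exact ⟨k, hk, hpiece k hk t h1 h2⟩
  refine norm_average_sub_le _ ⟨i, hi⟩ β (β i) _ fun t ht => ?_
  obtain ⟨j, hj, hjt⟩ := hseg t ht
  obtain ⟨k, hk, hki⟩ := hseg i hi
  rw [hjt, hki]
  have := dist_le_of_step_le (fun k => β (η k)) K Cκ hCκ.le hstep j k hj hk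
  exact this.trans (by linarith)
end

section
/- Let γ₂ > 0 and C₁, C₂ > 0. Let Z₁ and Z₂ be real-valued random variables on a probability space satisfying ℙ(|Z_i| ≥ τ) ≤ 2 exp(−(τ/C_i)^{γ₂}) for all τ > 0 and i = 1, 2 (these tail bounds in particular make Z₁Z₂ integrable). Then there exists a constant C > 0, depending only on C₁, C₂ and γ₂, such that ℙ( |Z₁ Z₂ − E[Z₁ Z₂]| ≥ τ ) ≤ 2 exp(−(τ/C)^{γ₂/2}) for all τ > 0. -/
/-!
Put `p = γ₂ / 2` and `K = C₁ C₂`. If `|Z₁ Z₂| ≥ s`, then `|Z₁| ≥ C₁ √(s / K)` or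
`|Z₂| ≥ C₂ √(s / K)`, so a union bound gives `ℙ(|Z₁ Z₂| ≥ s) ≤ 4 exp (-(s / K) ^ p)`
(`product_tail`). Integrating this tail (layer cake) bounds `|E[Z₁ Z₂]|` by a number `M` that
depends only on `K` and `p` (`exists_mean_bound`).

Take `C` so large that `2 M ≤ C (log 2) ^ (1 / p)` and `2 ≤ (C / (2 K)) ^ p`, and let
`u = (τ / C) ^ p`. If `u ≤ log 2`, the claimed bound is at least `1`. Otherwise `τ ≥ 2 M`, so the
event forces `|Z₁ Z₂| ≥ τ / 2`, whose probability is at most `4 exp (-2 u) ≤ 2 exp (-u)`.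
-/

open MeasureTheory
open scoped ENNReal

universe u

/-- Union bound for the uncentered product; the price is the prefactor `4`. -/
lemma product_tail {Ω : Type*} [MeasurableSpace Ω] (μ : Measure Ω) {γ C₁ C₂ : ℝ}
    (hC₁ : 0 < C₁) (hC₂ : 0 < C₂) {Z₁ Z₂ : Ω → ℝ}
    (h₁ : ∀ τ : ℝ, 0 < τ →
      μ {ω | τ ≤ |Z₁ ω|} ≤ ENNReal.ofReal (2 * Real.exp (-(τ / C₁) ^ γ)))
    (h₂ : ∀ τ : ℝ, 0 < τ →
      μ {ω | τ ≤ |Z₂ ω|} ≤ ENNReal.ofReal (2 * Real.exp (-(τ / C₂) ^ γ)))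
    {s : ℝ} (hs : 0 < s) :
    μ {ω | s ≤ |Z₁ ω * Z₂ ω|}
      ≤ ENNReal.ofReal (4 * Real.exp (-(s / (C₁ * C₂)) ^ (γ / 2))) := by
  have hr : 0 < s / (C₁ * C₂) := by positivity
  set r := √(s / (C₁ * C₂)) with hrdef
  have hr0 : 0 < r := Real.sqrt_pos.2 hr
  have hrs : r * r = s / (C₁ * C₂) := Real.mul_self_sqrt hr.le
  have hpow : r ^ γ = (s / (C₁ * C₂)) ^ (γ / 2) := by
    rw [hrdef, Real.sqrt_eq_rpow, ← Real.rpow_mul hr.le]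
    congr 1
    ring
  have hs' : s = (C₁ * r) * (C₂ * r) := by
    have : s = (C₁ * C₂) * (r * r) := by rw [hrs]; field_simp
    linarith
  have hsub : {ω | s ≤ |Z₁ ω * Z₂ ω|} ⊆ {ω | C₁ * r ≤ |Z₁ ω|} ∪ {ω | C₂ * r ≤ |Z₂ ω|} := by
    intro ω hω
    by_contra! hcon
    simp only [Set.mem_union, Set.mem_ofPred_eq, not_or, not_le] at hcon hω
    rw [abs_mul, hs'] at hω
    exact absurd hω (not_le.2 (mul_lt_mul'' hcon.1 hcon.2 (abs_nonneg _) (abs_nonneg _)))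
  have e₁ := h₁ (C₁ * r) (by positivity)
  have e₂ := h₂ (C₂ * r) (by positivity)
  rw [mul_div_cancel_left₀ _ hC₁.ne', hpow] at e₁
  rw [mul_div_cancel_left₀ _ hC₂.ne', hpow] at e₂
  refine (measure_mono hsub).trans ((measure_union_le _ _).trans ((add_le_add e₁ e₂).trans ?_))
  rw [← ENNReal.ofReal_add (by positivity) (by positivity)]
  exact ENNReal.ofReal_le_ofReal (by linarith)

/-- A stretched-exponential tail bounds the mean, uniformly over all probability spaces. No
integrability hypothesis is needed, as the Bochner integral of a non-integrable function is `0`. -/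
lemma exists_mean_bound {K p : ℝ} (hK : 0 < K) (hp : 0 < p) :
    ∃ M : ℝ, 0 ≤ M ∧ ∀ (Ω : Type u) [MeasurableSpace Ω] (μ : Measure Ω) (W : Ω → ℝ),
      Measurable W →
      (∀ s : ℝ, 0 < s → μ {ω | s ≤ |W ω|} ≤ ENNReal.ofReal (4 * Real.exp (-(s / K) ^ p))) →
      |∫ ω, W ω ∂μ| ≤ M := by
  have hint : IntegrableOn (fun t : ℝ => 4 * Real.exp (-(t / K) ^ p)) (Set.Ioi 0) := by
    have h := (integrableOn_rpow_mul_exp_neg_mul_rpow (s := 0) (p := p) (b := (K ^ p)⁻¹)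
      (by norm_num) hp (by positivity)).const_mul 4
    refine IntegrableOn.congr_fun h (fun t ht => ?_) measurableSet_Ioi
    have ht' : (0 : ℝ) < t := ht
    simp only [Real.rpow_zero, one_mul]
    rw [Real.div_rpow ht'.le hK.le]
    congr 2
    ring
  refine ⟨(∫⁻ t in Set.Ioi (0 : ℝ), ENNReal.ofReal (4 * Real.exp (-(t / K) ^ p))).toReal,
    ENNReal.toReal_nonneg, fun Ω _ μ W hW htail => ?_⟩
  refine (norm_integral_le_lintegral_norm W).trans (ENNReal.toReal_mono ?_ ?_)
  · exact hint.lintegral_lt_top.ne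
  · rw [lintegral_eq_lintegral_meas_le μ (Filter.Eventually.of_forall fun ω => norm_nonneg _)
      hW.norm.aemeasurable]
    exact setLIntegral_mono' measurableSet_Ioi fun t ht => htail t ht

/-- The centered product of two sub-Weibull(γ₂) random variables is sub-Weibull with
exponent γ₂/2, with a constant depending only on C₁, C₂ and γ₂. -/
theorem subWeibull_product
    (γ₂ C₁ C₂ : ℝ) (hγ₂ : 0 < γ₂) (hC₁ : 0 < C₁) (hC₂ : 0 < C₂) :
    ∃ C : ℝ, 0 < C ∧
      ∀ (Ω : Type u) [MeasurableSpace Ω] (μ : Measure Ω) [IsProbabilityMeasure μ]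
        (Z₁ Z₂ : Ω → ℝ), Measurable Z₁ → Measurable Z₂ →
        (∀ τ : ℝ, 0 < τ →
          μ {ω | τ ≤ |Z₁ ω|} ≤ ENNReal.ofReal (2 * Real.exp (-(τ / C₁) ^ γ₂))) →
        (∀ τ : ℝ, 0 < τ →
          μ {ω | τ ≤ |Z₂ ω|} ≤ ENNReal.ofReal (2 * Real.exp (-(τ / C₂) ^ γ₂))) →
        ∀ τ : ℝ, 0 < τ →
          μ {ω | τ ≤ |Z₁ ω * Z₂ ω - ∫ ω', Z₁ ω' * Z₂ ω' ∂μ|}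
            ≤ ENNReal.ofReal (2 * Real.exp (-(τ / C) ^ (γ₂ / 2))) := by
  have hp : 0 < γ₂ / 2 := by positivity
  have hK : 0 < C₁ * C₂ := by positivity
  obtain ⟨M, hM0, hM⟩ := exists_mean_bound.{u} hK hp
  have hlog : 0 < Real.log 2 := Real.log_pos one_lt_two
  set p := γ₂ / 2 with hpdef
  set K := C₁ * C₂ with hKdef
  set L := Real.log 2 ^ p⁻¹ with hLdef
  have hL : 0 < L := Real.rpow_pos_of_pos hlog _
  have hLp : L ^ p = Real.log 2 := Real.rpow_inv_rpow hlog.le hp.ne'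
  set B : ℝ := 2 ^ p⁻¹ with hBdef
  have hB : 0 < B := Real.rpow_pos_of_pos two_pos _
  have hBp : B ^ p = 2 := Real.rpow_inv_rpow zero_le_two hp.ne'
  set C := 2 * M / L + 2 * K * B with hCdef
  have hC : 0 < C := by positivity
  have hCL : 2 * M ≤ L * C := by
    have h : L * C = 2 * M + L * (2 * K * B) := by rw [hCdef]; field_simp
    have : 0 < L * (2 * K * B) := by positivity
    linarith
  have hCB : 2 * K * B ≤ C := by
    have : 0 ≤ 2 * M / L := by positivity
    linarith
  refine ⟨C, hC, fun Ω _ μ _ Z₁ Z₂ hZ₁ hZ₂ h₁ h₂ τ hτ => ?_⟩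
  have htail : ∀ s : ℝ, 0 < s →
      μ {ω | s ≤ |Z₁ ω * Z₂ ω|} ≤ ENNReal.ofReal (4 * Real.exp (-(s / K) ^ p)) :=
    fun s hs => product_tail μ hC₁ hC₂ h₁ h₂ hs
  have hm := hM Ω μ (fun ω => Z₁ ω * Z₂ ω) (hZ₁.mul hZ₂) htail
  set m := ∫ ω', Z₁ ω' * Z₂ ω' ∂μ
  rcases le_or_gt ((τ / C) ^ p) (Real.log 2) with hu | hu
  · refine prob_le_one.trans ?_
    rw [← ENNReal.ofReal_one]
    apply ENNReal.ofReal_le_ofReal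
    have h : Real.exp (-Real.log 2) ≤ Real.exp (-(τ / C) ^ p) :=
      Real.exp_le_exp.2 (neg_le_neg hu)
    rw [Real.exp_neg, Real.exp_log two_pos] at h
    linarith
  · have hτM : 2 * M ≤ τ := by
      have h : L < τ / C := by
        rw [← hLp] at hu
        exact (Real.rpow_lt_rpow_iff hL.le (by positivity) hp).1 hu
      rw [lt_div_iff₀ hC] at h
      linarith
    have hsub : {ω | τ ≤ |Z₁ ω * Z₂ ω - m|} ⊆ {ω | τ / 2 ≤ |Z₁ ω * Z₂ ω|} := by
      intro ω hω
      have h := abs_sub (Z₁ ω * Z₂ ω) m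
      simp only [Set.mem_ofPred_eq] at hω ⊢
      linarith
    refine (measure_mono hsub).trans ((htail (τ / 2) (by positivity)).trans ?_)
    apply ENNReal.ofReal_le_ofReal
    have hdouble : 2 * (τ / C) ^ p ≤ (τ / 2 / K) ^ p := by
      nth_rewrite 1 [← hBp]
      rw [← Real.mul_rpow hB.le (by positivity)]
      refine Real.rpow_le_rpow (by positivity) ?_ hp.le
      rw [div_div, ← mul_div_assoc, div_le_div_iff₀ hC (by positivity)]
      nlinarith
    have h2 : 2 * Real.exp (-(τ / C) ^ p) ≤ 1 := by
      have h : Real.exp (-(τ / C) ^ p) ≤ Real.exp (-Real.log 2) :=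
        Real.exp_le_exp.2 (neg_le_neg hu.le)
      rw [Real.exp_neg (Real.log 2), Real.exp_log two_pos] at h
      linarith
    have h3 : Real.exp (-(τ / 2 / K) ^ p) ≤ Real.exp (-(τ / C) ^ p) * Real.exp (-(τ / C) ^ p) := by
      rw [← Real.exp_add]
      exact Real.exp_le_exp.2 (by linarith)
    nlinarith [Real.exp_pos (-(τ / C) ^ p)]
end
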